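/- arXiv:1803.08785 — 4 statements merged into one kernel-verified Lean document; each statement's English description precedes it below -/
import Mathlib

section
/- Let D be a Dedekind domain and let n < m be positive integers. A matrix M ∈ Mat_{n×m}(D) is rectangular unimodular (i.e. there exist m−n rows in D^m whose adjunction to M yields an m×m matrix whose determinant is a unit of D) if and only if the ideal of D generated by all n×n minors of M is equal to D. -/
/-- An `n × m` matrix `M` over a commutative ring (with `n ≤ m`) is rectangular unimodular
if one can adjoin `m − n` rows to `M` so that the resulting `m × m` matrix has determinant
a unit. -/
def IsRectUnimodular {R : Type*} [CommRing R] {n m : ℕ} (h : n ≤ m)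
    (M : Matrix (Fin n) (Fin m) R) : Prop :=
  ∃ B : Matrix (Fin (m - n)) (Fin m) R,
    IsUnit
      (((Matrix.fromRows M B).submatrix
        (fun i : Fin m => finSumFinEquiv.symm (finCongr (Nat.add_sub_cancel' h).symm i))
        id).det)

open Module in
/-- In a Dedekind domain, nonzero elements have stable range one modulo them. -/
theorem dedekind_stable {D : Type*} [CommRing D] [IsDomain D] [IsDedekindDomain D]
    (a b c : D) (ha : a ≠ 0) (h : ∀ P : Ideal D, P.IsMaximal → a ∈ P → b ∈ P → c ∉ P) :
    ∃ t x y : D, x * a + y * (b + t * c) = 1 := by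
  classical
  have hI : Ideal.span {a} ≠ 0 := by simpa using ha
  have hfin := Ideal.finite_factors hI
  obtain ⟨t, ht⟩ := IsDedekindDomain.exists_forall_sub_mem_ideal (s := hfin.toFinset)
    (fun v : IsDedekindDomain.HeightOneSpectrum D => v.asIdeal) (fun _ => 1)
    (fun v _ => v.prime) (fun v _ w _ hvw heq => hvw (IsDedekindDomain.HeightOneSpectrum.ext heq))
    (fun v => if b ∈ v.1.asIdeal then 1 else 0)
  refine ⟨t, ?_⟩
  have key : Ideal.span {a, b + t * c} = ⊤ := by
    by_contra hne
    obtain ⟨P, hP, hle⟩ := Ideal.exists_le_maximal _ hne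
    have haP : a ∈ P := hle (Ideal.subset_span (by simp))
    have hbP : b + t * c ∈ P := hle (Ideal.subset_span (by simp))
    have hbot : P ≠ ⊥ := by
      rintro rfl
      exact ha (by simpa using haP)
    let v : IsDedekindDomain.HeightOneSpectrum D := ⟨P, hP.isPrime, hbot⟩
    have hv := ht v (by
      simp only [Set.Finite.mem_toFinset, Set.mem_ofPred_eq]
      rw [Ideal.dvd_iff_le, Ideal.span_le]
      simpa using haP)
    have hv' : t - (if b ∈ P then 1 else 0) ∈ P := by simpa [v] using hv
    by_cases hb : b ∈ P
    · rw [if_pos hb] at hv'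
      have hc := h P hP haP hb
      have : t * c ∈ P := by simpa using P.sub_mem hbP hb
      rcases hP.isPrime.mem_or_mem this with h1 | h1
      · apply hP.ne_top
        rw [Ideal.eq_top_iff_one]
        have := P.sub_mem h1 hv'
        simpa using this
      · exact hc h1
    · rw [if_neg hb, sub_zero] at hv'
      apply hb
      simpa using P.sub_mem hbP (P.mul_mem_right c hv')
  have : (1 : D) ∈ Ideal.span {a, b + t * c} := by rw [key]; trivial
  obtain ⟨x, y, hxy⟩ := Ideal.mem_span_pair.1 this
  exact ⟨x, y, hxy⟩

/-- The case of at least three coordinates, with a nonzero coordinate. -/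
theorem orbit_three {D : Type*} [CommRing D] [IsDomain D] [IsDedekindDomain D] {ι : Type*}
    [DecidableEq ι] (v : ι → D) (φ : Module.Dual D (ι → D)) (h : φ v = 1)
    (i j k : ι) (hij : i ≠ j) (hik : i ≠ k) (hjk : j ≠ k) (hi : v i ≠ 0) :
    ∃ f : (ι → D) ≃ₗ[D] (ι → D), f v = Pi.single k 1 := by
  set p := φ (Pi.single i 1) with hp
  set q := φ (Pi.single j 1) with hq
  obtain ⟨t, x, y, hxy⟩ := dedekind_stable (v i) (v j) (1 - p * v i - q * v j) hi (by
    intro P hP h1 h2 h3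
    apply hP.ne_top
    rw [Ideal.eq_top_iff_one]
    have := P.add_mem (P.add_mem h3 (P.mul_mem_left p h1)) (P.mul_mem_left q h2)
    ring_nf at this
    exact this)
  let φ₁ : Module.Dual D (ι → D) :=
    t • (φ - p • LinearMap.proj i - q • LinearMap.proj j)
  have h₁ : φ₁ (Pi.single j 1) = 0 := by
    simp [φ₁, ← hq, hij]
  obtain ⟨v₁, hv₁⟩ : ∃ v₁, v₁ = LinearEquiv.transvection h₁ v := ⟨_, rfl⟩
  have hv₁i : v₁ i = v i := by
    rw [hv₁, LinearEquiv.transvection.apply]; simp [hij]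
  have hv₁j : v₁ j = v j + t * (1 - p * v i - q * v j) := by
    rw [hv₁, LinearEquiv.transvection.apply]; simp [φ₁, h]
  let φ₂ : Module.Dual D (ι → D) := x • LinearMap.proj i + y • LinearMap.proj j
  let z : ι → D := v₁ i • Pi.single i 1 + v₁ j • Pi.single j 1
  have h₂ : φ₂ (Pi.single k 1 - v₁ + z) = 0 := by
    simp [φ₂, z, hij, hik, hjk, hij.symm]
  have e₂ : φ₂ v₁ = 1 := by
    simp [φ₂, hv₁i, hv₁j, hxy]
  have h₃ : (LinearMap.proj k : Module.Dual D (ι → D)) (-z) = 0 := by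
    simp [z, hik.symm, hjk.symm]
  refine ⟨((LinearEquiv.transvection h₁).trans (LinearEquiv.transvection h₂)).trans
    (LinearEquiv.transvection h₃), ?_⟩
  have h₃' : z k = 0 := by simpa using h₃
  rw [LinearEquiv.trans_apply, LinearEquiv.trans_apply, ← hv₁,
    LinearEquiv.transvection.apply h₂, e₂, LinearEquiv.transvection.apply h₃]
  simp [h₃']
  abel

/-- Automorphisms of `D^k` act transitively on unimodular vectors. -/
theorem orbit_fin {D : Type*} [CommRing D] [IsDomain D] [IsDedekindDomain D] (k : ℕ)
    (v : Fin k → D) (φ : Module.Dual D (Fin k → D)) (h : φ v = 1) :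
    ∃ (i : Fin k) (f : (Fin k → D) ≃ₗ[D] (Fin k → D)), f v = Pi.single i 1 := by
  have hsum : ∑ i, v i * φ (Pi.single i 1) = 1 := by
    refine Eq.trans ?_ h
    rw [LinearMap.pi_apply_eq_sum_univ φ v]
    refine Finset.sum_congr rfl fun i _ => ?_
    rw [smul_eq_mul]
    congr 2
    ext j
    simp [Pi.single_apply, eq_comm]
  match k with
  | 0 => simp at hsum
  | 1 =>
    simp only [Finset.univ_unique, Fin.default_eq_zero, Finset.sum_singleton] at hsum
    refine ⟨0, LinearEquiv.smulOfUnit (Units.mkOfMulEqOne _ _ hsum)⁻¹, ?_⟩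
    ext i
    fin_cases i
    have : (Units.mkOfMulEqOne _ _ hsum) = v 0 := rfl
    simp [LinearEquiv.smulOfUnit, Units.smul_def]
  | 2 =>
    rw [Fin.sum_univ_two] at hsum
    set p := φ (Pi.single 0 1)
    set q := φ (Pi.single 1 1)
    refine ⟨0, 
      { toFun := fun x => ![p * x 0 + q * x 1, - v 1 * x 0 + v 0 * x 1]
        invFun := fun y => ![v 0 * y 0 - q * y 1, v 1 * y 0 + p * y 1]
        map_add' := fun x y => by ext i; fin_cases i <;> simp <;> ring
        map_smul' := fun x y => by ext i; fin_cases i <;> simp <;> ring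
        left_inv := fun x => by
          ext i
          fin_cases i
          · simp; linear_combination (x 0) * hsum
          · simp; linear_combination (x 1) * hsum
        right_inv := fun x => by
          ext i
          fin_cases i
          · simp; linear_combination (x 0) * hsum
          · simp; linear_combination (x 1) * hsum }, ?_⟩
    ext i
    fin_cases i
    · simp; linear_combination hsum
    · simp; ring
  | k + 3 =>
    obtain ⟨i, hi⟩ : ∃ i, v i ≠ 0 := by
      by_contra! hv
      simp [hv] at hsum
    obtain ⟨j, hj⟩ : ∃ j, j ≠ i := exists_ne i
    obtain ⟨l, hl⟩ : ∃ l, l ∉ ({i, j} : Finset (Fin (k+3))) := by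
      by_contra! hl
      have := Finset.card_le_card (fun x _ => hl x : (Finset.univ : Finset (Fin (k+3))) ⊆ {i, j})
      have h2 := Finset.card_le_two (a := i) (b := j)
      simp at this
      omega
    simp at hl
    exact ⟨l, orbit_three v φ h i j l hj.symm (Ne.symm hl.1) (Ne.symm hl.2) hi⟩

theorem cancel_one {D : Type*} [CommRing D] [IsDomain D] [IsDedekindDomain D]
    (K : Type*) [AddCommGroup K] [Module D K] [Module.Finite D K] [Module.Free D (K × D)] :
    Module.Free D K := by
  let e : (K × D) ≃ₗ[D] (Fin (Module.finrank D (K × D)) → D) := (Module.finBasis D (K × D)).equivFun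
  obtain ⟨i, f, hf⟩ := orbit_fin _ (e (0, 1)) (LinearMap.snd D K D ∘ₗ e.symm.toLinearMap) (by simp)
  let g := e.trans f
  have hg : ∀ c : D, g (0, c) = Pi.single i c := by
    intro c
    have : ((0, c) : K × D) = c • (0, 1) := by simp
    rw [this, map_smul, show g (0, 1) = Pi.single i 1 from hf]
    ext j
    simp [Pi.single_apply]
  let r : K →ₗ[D] ({j // j ≠ i} → D) :=
    LinearMap.funLeft D D Subtype.val ∘ₗ g.toLinearMap ∘ₗ LinearMap.inl D K D
  have hr : ∀ x j, r x j = g (x, 0) j.1 := fun x j => rfl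
  have hbij : Function.Bijective r := by
    constructor
    · rw [injective_iff_map_eq_zero]
      intro x hx
      have : g (x, 0) = g (0, g (x, 0) i) := by
        rw [hg]
        ext j
        by_cases hj : j = i
        · subst hj; simp
        · have := congrFun hx ⟨j, hj⟩
          rw [hr] at this
          simpa [hj] using this
      have := g.injective this
      simpa using congrArg Prod.fst this
    · intro y
      let z : Fin (Module.finrank D (K × D)) → D := fun j => if hj : j = i then 0 else y ⟨j, hj⟩
      refine ⟨(g.symm z).1, ?_⟩
      ext j
      rw [hr]
      have : (((g.symm z).1, 0) : K × D) = g.symm z - (0, (g.symm z).2) := by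
        ext <;> simp
      rw [this, map_sub, hg]
      simp [z, j.2]
  exact Module.Free.of_equiv (LinearEquiv.ofBijective r hbij).symm

theorem cancel_fin {D : Type*} [CommRing D] [IsDomain D] [IsDedekindDomain D]
    (K : Type*) [AddCommGroup K] [Module D K] [Module.Finite D K] (n : ℕ)
    (h : Module.Free D ((Fin n → D) × K)) :
    Module.Free D K := by
  induction n with
  | zero => exact Module.Free.of_equiv (LinearEquiv.uniqueProd : ((Fin 0 → D) × K) ≃ₗ[D] K)
  | succ n ih =>
    apply ih
    have e : ((Fin (n + 1) → D) × K) ≃ₗ[D] (((Fin n → D) × K) × D) :=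
      (((Fin.consLinearEquiv D (fun _ : Fin (n + 1) => D)).symm.prodCongr
        (LinearEquiv.refl D K)).trans (LinearEquiv.prodAssoc D D (Fin n → D) K)).trans
        (LinearEquiv.prodComm D D _)
    have := Module.Free.of_equiv e
    exact cancel_one _

theorem det_mul_mem {R : Type*} [CommRing R] {n m : ℕ} (M : Matrix (Fin n) (Fin m) R)
    (N : Matrix (Fin m) (Fin n) R) :
    (M * N).det ∈ Ideal.span {d : R | ∃ c : Fin n ↪ Fin m, d = (M.submatrix id ⇑c).det} := by
  have h : (M * N).transpose = fun i => ∑ j, N j i • M.transpose j := by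
    ext i k
    simp [Matrix.mul_apply, mul_comm]
  rw [← Matrix.det_transpose, h]
  have := (Matrix.detRowAlternating (R := R) (n := Fin n)).toMultilinearMap.map_sum
    (fun i j => N j i • M.transpose j)
  change (Matrix.detRowAlternating (R := R) (n := Fin n)).toMultilinearMap _ ∈ _
  rw [this]
  refine Ideal.sum_mem _ fun c _ => ?_
  rw [MultilinearMap.map_smul_univ, smul_eq_mul]
  apply Ideal.mul_mem_left
  have hc : (Matrix.detRowAlternating (R := R) (n := Fin n)).toMultilinearMap
      (fun i => M.transpose (c i)) = (M.submatrix id c).det := by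
    rw [← Matrix.det_transpose]; rfl
  rw [hc]
  by_cases hinj : Function.Injective c
  · exact Ideal.subset_span ⟨⟨c, hinj⟩, rfl⟩
  · rw [Function.not_injective_iff] at hinj
    obtain ⟨i, j, hij, hne⟩ := hinj
    rw [Matrix.det_zero_of_column_eq hne (by intro k; simp [hij])]
    exact Ideal.zero_mem _

theorem exists_right_inv {R : Type*} [CommRing R] {n m : ℕ} (M : Matrix (Fin n) (Fin m) R)
    (h : Ideal.span {d : R | ∃ c : Fin n ↪ Fin m, d = (M.submatrix id ⇑c).det} = ⊤) :
    ∃ N : Matrix (Fin m) (Fin n) R, M * N = 1 := by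
  have key : ∀ d ∈ Ideal.span {d : R | ∃ c : Fin n ↪ Fin m, d = (M.submatrix id ⇑c).det},
      ∃ N : Matrix (Fin m) (Fin n) R, M * N = d • 1 := by
    intro d hd
    induction hd using Submodule.span_induction with
    | mem x hx =>
      obtain ⟨c, rfl⟩ := hx
      refine ⟨(1 : Matrix (Fin m) (Fin m) R).submatrix id c * (M.submatrix id c).adjugate, ?_⟩
      rw [← Matrix.mul_assoc, ← Matrix.mul_adjugate]
      congr 1
      ext i j
      simp [Matrix.mul_apply, Matrix.one_apply]
    | zero => exact ⟨0, by simp⟩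
    | add x y _ _ hx hy =>
      obtain ⟨N, hN⟩ := hx
      obtain ⟨N', hN'⟩ := hy
      exact ⟨N + N', by rw [Matrix.mul_add, hN, hN', add_smul]⟩
    | smul a x _ hx =>
      obtain ⟨N, hN⟩ := hx
      exact ⟨a • N, by rw [Matrix.mul_smul, hN, smul_smul, smul_eq_mul]⟩
  obtain ⟨N, hN⟩ := key 1 (by rw [h]; trivial)
  exact ⟨N, by simpa using hN⟩

theorem complete_of_right_inv {D : Type*} [CommRing D] [IsDomain D] [IsDedekindDomain D]
    {n m : ℕ} (hnm : n ≤ m) (M : Matrix (Fin n) (Fin m) D) (N : Matrix (Fin m) (Fin n) D)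
    (h : M * N = 1) : IsRectUnimodular hnm M := by
  let s : (Fin n → D) →ₗ[D] (Fin m → D) := M.vecMulLinear
  let r : (Fin m → D) →ₗ[D] (Fin n → D) := N.vecMulLinear
  have hrs : ∀ x, r (s x) = x := by
    intro x
    simp [r, s, h]
  let g : ((Fin n → D) × LinearMap.ker r) →ₗ[D] (Fin m → D) :=
    s.coprod (LinearMap.ker r).subtype
  have hg : Function.Bijective g := by
    constructor
    · rw [injective_iff_map_eq_zero]
      rintro ⟨x, k⟩ hx
      have hx' : s x + (k : Fin m → D) = 0 := by simpa [g] using hx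
      have h1 : x = 0 := by
        have := congrArg r hx'
        rwa [map_add, hrs, LinearMap.mem_ker.1 k.2, map_zero, add_zero] at this
      subst h1
      have h2 : k = 0 := by
        ext1
        simpa using hx'
      rw [h2]; rfl
    · intro y
      refine ⟨(r y, ⟨y - s (r y), by simp [LinearMap.mem_ker, hrs]⟩), ?_⟩
      simp [g]
  let e := LinearEquiv.ofBijective g hg
  have hfree : Module.Free D (LinearMap.ker r) := cancel_fin _ n (Module.Free.of_equiv e.symm)
  have hrank : Module.finrank D (LinearMap.ker r) = m - n := by
    have := e.finrank_eq
    simp at this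
    omega
  let b := Module.finBasisOfFinrankEq D (LinearMap.ker r) hrank
  let B : Module.Basis (Fin n ⊕ Fin (m - n)) D (Fin m → D) :=
    ((Pi.basisFun D (Fin n)).prod b).map e
  let σ : Fin m ≃ Fin n ⊕ Fin (m - n) :=
    (finCongr (Nat.add_sub_cancel' hnm).symm).trans finSumFinEquiv.symm
  refine ⟨fun j => (b j : Fin m → D), ?_⟩
  have hu := (Pi.basisFun D (Fin m)).isUnit_det (B.reindex σ.symm)
  rw [Module.Basis.det_apply, ← Matrix.det_transpose] at hu
  convert hu using 2
  ext i j
  have hB : ∀ a, B a j = Matrix.fromRows M (fun j => (b j : Fin m → D)) a j := by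
    rintro (a | a)
    · simp [B, e, g, s]
      rfl
    · simp [B, e, g, s]
      rfl
  simp only [Matrix.transpose_apply, Module.Basis.toMatrix_apply, Pi.basisFun_repr,
    Module.Basis.reindex_apply, Equiv.symm_symm, hB]
  rfl

/-- over a Dedekind domain `D`, a matrix `M ∈ Mat_{n×m}(D)` (with `n < m`) is
rectangular unimodular if and only if the ideal generated by all `n × n` minors of `M` is
all of `D`. -/
theorem rectUnimodular_iff_span_minors_eq_top
    {D : Type*} [CommRing D] [IsDomain D] [IsDedekindDomain D]
    (n m : ℕ) (hn : 0 < n) (hnm : n < m) (M : Matrix (Fin n) (Fin m) D) :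
    IsRectUnimodular hnm.le M ↔
      Ideal.span {d : D | ∃ c : Fin n ↪ Fin m, d = (M.submatrix id ⇑c).det} = ⊤ := by
  constructor
  · rintro ⟨B, hB⟩
    let σ : Fin m ≃ Fin n ⊕ Fin (m - n) :=
      (finCongr (Nat.add_sub_cancel' hnm.le).symm).trans finSumFinEquiv.symm
    obtain ⟨A, hA⟩ : ∃ A, A = (Matrix.fromRows M B).submatrix σ id := ⟨_, rfl⟩
    have hA' : IsUnit A.det := by rw [hA]; exact hB
    have h1 : M * (A⁻¹).submatrix id (fun i => σ.symm (Sum.inl i)) = 1 := by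
      have h2 : M = A.submatrix (fun i => σ.symm (Sum.inl i)) id := by
        rw [hA]; ext i j; simp
      have h3 := Matrix.mul_nonsing_inv A hA'
      ext i j
      have h4 := congrFun (congrFun h3 (σ.symm (Sum.inl i))) (σ.symm (Sum.inl j))
      rw [h2]
      simpa [Matrix.mul_apply, Matrix.one_apply] using h4
    have := det_mul_mem M ((A⁻¹).submatrix id (fun i => σ.symm (Sum.inl i)))
    rw [h1, Matrix.det_one] at this
    exact (Ideal.eq_top_iff_one _).2 this
  · intro h
    obtain ⟨N, hN⟩ := exists_right_inv M h
    exact complete_of_right_inv hnm.le M N hN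
end

section
/- Let R be an integral domain and n a positive integer. Let X be the n × n matrix over the polynomial ring R[x_{1,1}, …, x_{n,n}] whose (i,j) entry is the variable x_{i,j}. Then det(X) is an irreducible element of R[x_{1,1}, …, x_{n,n}]. -/
open MvPolynomial in
/-- If a product of two polynomials gets multiplied by `T` when scaling the variables in `S` by `T`,
then one of the factors does not involve the variables in `S`. -/
lemma free_or_free {σ R : Type*} [CommRing R] [IsDomain R] (S : Set σ) [DecidablePred (· ∈ S)]
    (f g : MvPolynomial σ R) (h0 : f * g ≠ 0)
    (h : aeval (fun k : σ => if k ∈ S then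
        (Polynomial.C (X k) * Polynomial.X : Polynomial (MvPolynomial σ R))
        else Polynomial.C (X k)) (f * g) = Polynomial.C (f * g) * Polynomial.X) :
    (∀ k ∈ S, k ∉ f.vars) ∨ (∀ k ∈ S, k ∉ g.vars) := by
  classical
  set φ : MvPolynomial σ R →ₐ[R] Polynomial (MvPolynomial σ R) :=
    aeval (fun k : σ => if k ∈ S then
        (Polynomial.C (X k) * Polynomial.X : Polynomial (MvPolynomial σ R))
        else Polynomial.C (X k)) with hφ
  have key : ∀ p : MvPolynomial σ R, (φ p).natDegree = 0 → ∀ k ∈ S, k ∉ p.vars := by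
    intro p hp k hk hkv
    obtain ⟨q, hq⟩ := Polynomial.natDegree_eq_zero.1 hp
    have e1 : ((Polynomial.aeval (1 : MvPolynomial σ R)).restrictScalars R).comp φ
        = AlgHom.id R _ := by
      ext x
      by_cases hx : x ∈ S <;> simp [hφ, hx]
    have e0 : ((Polynomial.aeval (0 : MvPolynomial σ R)).restrictScalars R).comp φ
        = bind₁ (fun k => if k ∈ S then 0 else X k) := by
      ext x
      by_cases hx : x ∈ S <;> simp [hφ, hx]
    have h1 := DFunLike.congr_fun e1 p
    have h2 := DFunLike.congr_fun e0 p
    simp only [AlgHom.comp_apply, ← hq] at h1 h2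
    simp at h1 h2
    rw [h1] at h2
    rw [h2] at hkv
    have := vars_bind₁ _ _ hkv
    simp only [Finset.mem_biUnion] at this
    obtain ⟨l, -, hl⟩ := this
    by_cases hlS : l ∈ S
    · simp [hlS] at hl
    · simp [hlS] at hl
      exact hlS (hl ▸ hk)
  rw [map_mul] at h
  have hne : φ f * φ g ≠ 0 := by
    rw [h]
    exact mul_ne_zero (by simpa using h0) Polynomial.X_ne_zero
  have hd := congrArg Polynomial.natDegree h
  rw [Polynomial.natDegree_mul (left_ne_zero_of_mul hne) (right_ne_zero_of_mul hne),
    Polynomial.natDegree_C_mul_X _ h0] at hd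
  by_cases hf : (φ f).natDegree = 0
  · exact Or.inl (key f hf)
  · exact Or.inr (key g (by omega))

open MvPolynomial in
lemma eval_generic_det {R : Type*} [CommRing R] (n : ℕ) (A : Matrix (Fin n) (Fin n) R) :
    eval (fun p : Fin n × Fin n => A p.1 p.2) (Matrix.det
        (Matrix.of fun i j : Fin n =>
          (MvPolynomial.X (i, j) : MvPolynomial (Fin n × Fin n) R))) = A.det := by
  rw [RingHom.map_det]
  congr 1
  ext i j
  simp

open MvPolynomial in
lemma mem_vars_generic_det {R : Type*} [CommRing R] [Nontrivial R] (n : ℕ) (i j : Fin n) :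
    (i, j) ∈ (Matrix.det
        (Matrix.of fun i j : Fin n =>
          (MvPolynomial.X (i, j) : MvPolynomial (Fin n × Fin n) R))).vars := by
  classical
  by_contra hv
  let A : Matrix (Fin n) (Fin n) R := (Equiv.swap i j).permMatrix R
  let B : Matrix (Fin n) (Fin n) R := A.updateRow i 0
  have hA : IsUnit A.det := by
    simp only [A, Matrix.det_permutation]
    exact (Units.isUnit (Equiv.Perm.sign (Equiv.swap i j))).map (Int.castRingHom R)
  have hB : B.det = 0 := Matrix.det_eq_zero_of_row_eq_zero i (by simp [B])
  have : A.det = B.det := by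
    rw [← eval_generic_det n A, ← eval_generic_det n B]
    refine eval₂Hom_congr' rfl ?_ rfl
    rintro ⟨k, l⟩ hk -
    by_cases hki : k = i
    · subst hki
      have : l ≠ j := by rintro rfl; exact hv hk
      simp [A, B, PEquiv.toMatrix_apply, Equiv.toPEquiv_apply, this.symm]
    · simp [B, hki]
  rw [this, hB] at hA
  exact not_isUnit_zero hA

open MvPolynomial in
lemma isUnit_of_rows_cols {R : Type*} [CommRing R] [IsDomain R] (n : ℕ) (hn : 0 < n)
    (f g : MvPolynomial (Fin n × Fin n) R)
    (hfg : Matrix.det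
        (Matrix.of fun i j : Fin n =>
          (MvPolynomial.X (i, j) : MvPolynomial (Fin n × Fin n) R)) = f * g)
    (hr : ∀ j, (j, (⟨0, hn⟩ : Fin n)) ∉ f.vars)
    (hrow : ∀ i, (∀ j, (i, j) ∉ f.vars) ∨ (∀ j, (i, j) ∉ g.vars)) : IsUnit f := by
  classical
  have hf : f.vars = ∅ := by
    rw [Finset.eq_empty_iff_forall_notMem]
    rintro ⟨i, j⟩
    rcases hrow i with h | h
    · exact h j
    · exfalso
      have := mem_vars_generic_det (R := R) n i ⟨0, hn⟩
      rw [hfg] at this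
      rcases Finset.mem_union.1 (vars_mul _ _ this) with h' | h'
      · exact hr _ h'
      · exact h _ h'
  rw [vars_eq_empty_iff_eq_C] at hf
  have h1 := eval_generic_det (R := R) n 1
  rw [hfg, map_mul, hf, eval_C, Matrix.det_one] at h1
  rw [hf]
  exact (IsUnit.of_mul_eq_one _ h1).map C

/-- the determinant of the generic `n × n` matrix, whose `(i,j)` entry is the
variable `x_{i,j}` of the polynomial ring `R[x_{1,1}, …, x_{n,n}]`, is irreducible. -/
theorem det_generic_matrix_irreducible {R : Type*} [CommRing R] [IsDomain R]
    (n : ℕ) (hn : 0 < n) :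
    Irreducible
      (Matrix.det
        (Matrix.of fun i j : Fin n =>
          (MvPolynomial.X (i, j) : MvPolynomial (Fin n × Fin n) R))) := by
  classical
  have hne : (Matrix.det
        (Matrix.of fun i j : Fin n =>
          (MvPolynomial.X (i, j) : MvPolynomial (Fin n × Fin n) R))) ≠ 0 :=
    Matrix.det_mvPolynomialX_ne_zero (Fin n) R
  refine ⟨fun hu => ?_, fun f g hfg => ?_⟩
  · have := hu.map (MvPolynomial.eval (fun p : Fin n × Fin n => (0 : Matrix _ _ R) p.1 p.2))
    have hne0 : Nonempty (Fin n) := ⟨⟨0, hn⟩⟩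
    rw [eval_generic_det, Matrix.det_zero] at this
    exact not_isUnit_zero this
  have hrow : ∀ i, (∀ j, (i, j) ∉ f.vars) ∨ (∀ j, (i, j) ∉ g.vars) := by
    intro i
    have := free_or_free {p : Fin n × Fin n | p.1 = i} f g (hfg ▸ hne) (by
      rw [← hfg, AlgHom.map_det, RingHom.map_det, mul_comm]
      have : ∀ M : Matrix (Fin n) (Fin n) (Polynomial (MvPolynomial (Fin n × Fin n) R)),
          Polynomial.X * M.det = (M.updateRow i ((Polynomial.X :
            Polynomial (MvPolynomial (Fin n × Fin n) R)) • M i)).det := by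
        intro M
        rw [Matrix.det_updateRow_smul, Matrix.updateRow_eq_self]
      rw [this]
      congr 1
      ext1 k l
      by_cases hk : k = i
      · subst hk; simp
      · simp [hk])
    exact this.imp (fun h j => h (i, j) rfl) (fun h j => h (i, j) rfl)
  have hcol : ∀ j, (∀ i, (i, j) ∉ f.vars) ∨ (∀ i, (i, j) ∉ g.vars) := by
    intro j
    have := free_or_free {p : Fin n × Fin n | p.2 = j} f g (hfg ▸ hne) (by
      rw [← hfg, AlgHom.map_det, RingHom.map_det, mul_comm]
      have : ∀ M : Matrix (Fin n) (Fin n) (Polynomial (MvPolynomial (Fin n × Fin n) R)),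
          Polynomial.X * M.det = (M.updateCol j ((Polynomial.X :
            Polynomial (MvPolynomial (Fin n × Fin n) R)) • fun i => M i j)).det := by
        intro M
        rw [Matrix.det_updateCol_smul, Matrix.updateCol_eq_self]
      rw [this]
      congr 1
      ext1 k l
      by_cases hk : l = j
      · subst hk; simp
      · simp [hk])
    exact this.imp (fun h i => h (i, j) rfl) (fun h i => h (i, j) rfl)
  rcases hcol ⟨0, hn⟩ with h | h
  · exact Or.inl (isUnit_of_rows_cols n hn f g hfg h hrow)
  · exact Or.inr (isUnit_of_rows_cols n hn g f (hfg.trans (mul_comm _ _)) h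
      (fun i => (hrow i).symm))
end

section
/- Let d and M be positive integers and let f, g ∈ ℤ[x_1, …, x_d] be coprime polynomials (having no common nonconstant factor). Define S_M(f,g) = { a ∈ ℤ^d : f(a) ≡ g(a) ≡ 0 (mod p) for some prime p > M }. Then the upper density ρ̄(S_M(f,g)) tends to 0 as M → ∞. -/
open Filter

/-- The upper density of a set `S ⊆ ℤ^d`:
`ρ̄(S) = limsup_{B→∞} |S ∩ [−B,B)^d| / (2B)^d`. -/
noncomputable def upperDensity {d : ℕ} (S : Set (Fin d → ℤ)) : ℝ :=
  limsup
    (fun B : ℕ =>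
      (Nat.card {a : Fin d → ℤ // a ∈ S ∧ ∀ i, -(B : ℤ) ≤ a i ∧ a i < B} : ℝ) /
        (2 * (B : ℝ)) ^ d)
    atTop


namespace Ekedahl
open MvPolynomial Finset

open Classical in
/-- elimination: a nonzero element of the base ring in the ideal `(f, h)`. -/
theorem elim_exists {R : Type*} [CommRing R] [IsDomain R] [UniqueFactorizationMonoid R]
    (f h : Polynomial R) (hh : Irreducible h) (hdeg : h.natDegree ≠ 0) (hf : ¬ h ∣ f) :
    ∃ u v : Polynomial R, ∃ r : R, r ≠ 0 ∧ u * f + v * h = Polynomial.C r := by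
  let _ : NormalizedGCDMonoid R := Nonempty.some inferInstance
  let K := FractionRing R
  have hp : h.IsPrimitive := hh.isPrimitive hdeg
  have hK : Irreducible (h.map (algebraMap R K)) :=
    (hp.irreducible_iff_irreducible_map_fraction_map).1 hh
  have hn : ¬ h.map (algebraMap R K) ∣ f.map (algebraMap R K) := fun hd =>
    hf (hp.dvd_of_fraction_map_dvd_fraction_map hd)
  have hc : IsCoprime (h.map (algebraMap R K)) (f.map (algebraMap R K)) :=
    (hK.coprime_iff_not_dvd).2 hn
  obtain ⟨v, u, huv⟩ := hc
  obtain ⟨b, hb0, hb⟩ := IsLocalization.integerNormalization_spec (nonZeroDivisors R) u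
  obtain ⟨c, hc0, hc⟩ := IsLocalization.integerNormalization_spec (nonZeroDivisors R) v
  refine ⟨Polynomial.C (c : R) * IsLocalization.integerNormalization (nonZeroDivisors R) u,
    Polynomial.C (b : R) * IsLocalization.integerNormalization (nonZeroDivisors R) v, b * c,
    mul_ne_zero (nonZeroDivisors.ne_zero hb0) (nonZeroDivisors.ne_zero hc0), ?_⟩
  apply Polynomial.map_injective (algebraMap R K) (IsFractionRing.injective R K)
  simp only [Polynomial.map_add, Polynomial.map_mul, Polynomial.map_C, hb, hc]
  have e : ∀ (x : R) (w : Polynomial K), x • w = Polynomial.C (algebraMap R K x) * w := by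
    intro x w
    rw [← Polynomial.smul_eq_C_mul, algebraMap_smul]
  rw [e, e, map_mul, Polynomial.C_mul]
  linear_combination (Polynomial.C (algebraMap R K b) * Polynomial.C (algebraMap R K c)) * huv

noncomputable abbrev ivl (B : ℕ) : Finset ℤ := Finset.Ico (-(B : ℤ)) B

noncomputable abbrev box (n B : ℕ) : Finset (Fin n → ℤ) := Fintype.piFinset fun _ => ivl B

def BadAt {n : ℕ} (f g : MvPolynomial (Fin n) ℤ) (M : ℕ) (a : Fin n → ℤ) : Prop :=
  ∃ p : ℕ, p.Prime ∧ M < p ∧ (p : ℤ) ∣ eval a f ∧ (p : ℤ) ∣ eval a g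

open Classical in
noncomputable def bad {n : ℕ} (f g : MvPolynomial (Fin n) ℤ) (M B : ℕ) : Finset (Fin n → ℤ) :=
  (box n B).filter (BadAt f g M)

def Neg {n : ℕ} (f g : MvPolynomial (Fin n) ℤ) : Prop :=
  ∀ ε : ℝ, 0 < ε → ∃ M B₀ : ℕ, ∀ B, B₀ ≤ B → ((bad f g M B).card : ℝ) ≤ ε * (2 * (B : ℝ)) ^ n

theorem BadAt.mono {n : ℕ} {f g : MvPolynomial (Fin n) ℤ} {M N : ℕ} (h : M ≤ N) {a}
    (H : BadAt f g N a) : BadAt f g M a := by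
  obtain ⟨p, hp, h1, h2⟩ := H
  exact ⟨p, hp, by omega, h2⟩

theorem bad_mono {n : ℕ} {f g : MvPolynomial (Fin n) ℤ} {M N B : ℕ} (h : M ≤ N) :
    bad f g N B ⊆ bad f g M B := by
  classical
  intro a ha
  simp only [bad, Finset.mem_filter] at ha ⊢
  exact ⟨ha.1, ha.2.mono h⟩

theorem Neg.of_imp {n : ℕ} {f g f' g' : MvPolynomial (Fin n) ℤ} (H : Neg f' g')
    (h : ∀ (p : ℕ) a, (p : ℤ) ∣ eval a f → (p : ℤ) ∣ eval a g →
      (p : ℤ) ∣ eval a f' ∧ (p : ℤ) ∣ eval a g') : Neg f g := by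
  classical
  intro ε hε
  obtain ⟨M, B₀, hB⟩ := H ε hε
  refine ⟨M, B₀, fun B hB' => le_trans ?_ (hB B hB')⟩
  have : bad f g M B ⊆ bad f' g' M B := by
    intro a ha
    simp only [bad, Finset.mem_filter] at ha ⊢
    obtain ⟨p, hp, h1, h2, h3⟩ := ha.2
    exact ⟨ha.1, p, hp, h1, h p a h2 h3⟩
  exact_mod_cast Finset.card_le_card this

theorem Neg.symm {n : ℕ} {f g : MvPolynomial (Fin n) ℤ} (H : Neg f g) : Neg g f :=
  H.of_imp fun _ _ h1 h2 => ⟨h2, h1⟩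

theorem Neg.mul {n : ℕ} {f g g' : MvPolynomial (Fin n) ℤ} (H : Neg f g) (H' : Neg f g') :
    Neg f (g * g') := by
  classical
  intro ε hε
  obtain ⟨M, B₀, hB⟩ := H (ε / 2) (by positivity)
  obtain ⟨M', B₀', hB'⟩ := H' (ε / 2) (by positivity)
  refine ⟨max M M', max B₀ B₀', fun B hBB => ?_⟩
  have h1 := hB B (le_trans (le_max_left _ _) hBB)
  have h2 := hB' B (le_trans (le_max_right _ _) hBB)
  have : bad f (g * g') (max M M') B ⊆ bad f g M B ∪ bad f g' M' B := by
    intro a ha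
    simp only [bad, Finset.mem_filter, Finset.mem_union] at ha ⊢
    obtain ⟨hb, p, hp, hM, h1, h2⟩ := ha
    rw [map_mul] at h2
    rcases (Nat.prime_iff_prime_int.1 hp).dvd_or_dvd h2 with h | h
    · exact Or.inl ⟨hb, p, hp, lt_of_le_of_lt (le_max_left _ _) hM, h1, h⟩
    · exact Or.inr ⟨hb, p, hp, lt_of_le_of_lt (le_max_right _ _) hM, h1, h⟩
  have h3 : ((bad f (g * g') (max M M') B).card : ℝ) ≤
      (bad f g M B).card + (bad f g' M' B).card := by
    exact_mod_cast (Finset.card_le_card this).trans (Finset.card_union_le _ _)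
  linarith

theorem neg_C {n : ℕ} (f : MvPolynomial (Fin n) ℤ) (c : ℤ) (hc : c ≠ 0) : Neg f (C c) := by
  classical
  intro ε hε
  refine ⟨c.natAbs, 0, fun B _ => ?_⟩
  have : bad f (C c) c.natAbs B = ∅ := by
    apply Finset.filter_eq_empty_iff.2
    rintro a - ⟨p, hp, hM, -, h⟩
    rw [eval_C] at h
    have := Nat.le_of_dvd (Int.natAbs_pos.2 hc) (Int.natCast_dvd.1 h)
    omega
  rw [this]
  simp
  positivity

theorem neg_unit {n : ℕ} (f g : MvPolynomial (Fin n) ℤ) (hg : IsUnit g) : Neg f g := by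
  have := neg_C f 1 one_ne_zero
  refine this.of_imp fun p a h1 h2 => ⟨h1, ?_⟩
  rw [eval_C]
  exact h2.trans (isUnit_iff_dvd_one.1 (hg.map (eval a)))

/-- the core counting statement -/
def Core : Prop := ∀ (n : ℕ) (f : MvPolynomial (Fin (n+1)) ℤ) (h : MvPolynomial (Fin n) ℤ) (i : ℕ),
  h ≠ 0 → Neg ((finSuccEquiv ℤ n f).coeff i) h →
    Neg f ((finSuccEquiv ℤ n).symm (Polynomial.C h))

theorem neg_const (hcore : Core) (n : ℕ)
    (ih : ∀ f h : MvPolynomial (Fin n) ℤ, Irreducible h → ¬ h ∣ f → Neg f h)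
    (f : MvPolynomial (Fin (n+1)) ℤ) (h : MvPolynomial (Fin n) ℤ) (hh : Irreducible h)
    (hf : ¬ Polynomial.C h ∣ finSuccEquiv ℤ n f) :
    Neg f ((finSuccEquiv ℤ n).symm (Polynomial.C h)) := by
  rw [Polynomial.C_dvd_iff_dvd_coeff] at hf
  push Not at hf
  obtain ⟨i, hi⟩ := hf
  exact hcore n f h i hh.ne_zero (ih _ _ hh hi)

theorem main_irr (hcore : Core) (n : ℕ) :
    ∀ f h : MvPolynomial (Fin n) ℤ, Irreducible h → ¬ h ∣ f → Neg f h := by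
  induction n with
  | zero =>
    intro f h hh _
    have e := h.eq_C_of_isEmpty
    rw [e]
    apply neg_C
    intro h0
    apply hh.ne_zero
    rw [e, h0, C_0]
  | succ n ih =>
    intro f h hh hf
    set E := finSuccEquiv ℤ n with hE
    have hh' : Irreducible (E h) := (MulEquiv.irreducible_iff E).2 hh
    have hf' : ¬ E h ∣ E f := fun hd => hf ((map_dvd_iff E).1 hd)
    by_cases hdeg : (E h).natDegree = 0
    · obtain ⟨h0, hh0⟩ := Polynomial.natDegree_eq_zero.1 hdeg
      have e : h = E.symm (Polynomial.C h0) := by rw [hh0]; simp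
      rw [e]
      rw [← hh0] at hh' hf'
      exact neg_const hcore n ih f h0 (by
        refine ⟨fun hu => hh'.not_isUnit (hu.map Polynomial.C), fun a b hab => ?_⟩
        have := hh'.isUnit_or_isUnit (a := Polynomial.C a) (b := Polynomial.C b) (by rw [hab, Polynomial.C_mul])
        simpa using this) hf'
    · obtain ⟨u, v, r, hr, huv⟩ := elim_exists (E f) (E h) hh' hdeg hf'
      have key : ∀ r : MvPolynomial (Fin n) ℤ, r ≠ 0 → Neg h (E.symm (Polynomial.C r)) := by
        intro r
        refine WfDvdMonoid.induction_on_irreducible r (fun h => absurd rfl h) ?_ ?_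
        · intro u hu _
          exact neg_unit _ _ ((hu.map Polynomial.C).map E.symm)
        · intro a q ha hq iha _
          rw [Polynomial.C_mul, map_mul]
          refine Neg.mul (neg_const hcore n ih h q hq ?_) (iha ha)
          intro hd
          have hp := hh'.isPrimitive hdeg
          exact hq.not_isUnit (hp q hd)
      refine (key r hr).of_imp fun p a h1 h2 => ⟨h2, ?_⟩
      rw [← huv]
      simp only [map_add, map_mul, AlgEquiv.symm_apply_apply]
      exact dvd_add (h1.mul_left _) (h2.mul_left _)

theorem main_neg (hcore : Core) (d : ℕ) (hd : 0 < d) (f g : MvPolynomial (Fin d) ℤ)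
    (hfg : ∀ h : MvPolynomial (Fin d) ℤ, h ∣ f → h ∣ g → h.totalDegree = 0) : Neg f g := by
  have aux : ∀ f : MvPolynomial (Fin d) ℤ, ∀ g : MvPolynomial (Fin d) ℤ, g ≠ 0 → 
      (∀ h : MvPolynomial (Fin d) ℤ, h ∣ f → h ∣ g → h.totalDegree = 0) → Neg f g := by
    intro f g
    refine WfDvdMonoid.induction_on_irreducible g (fun h => absurd rfl h) ?_ ?_
    · intro u hu _ _
      exact neg_unit _ _ hu
    · intro a q ha hq iha _ hyp
      refine Neg.mul ?_ (iha ha fun h h1 h2 => hyp h h1 (h2.mul_left _))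
      by_cases hqf : q ∣ f
      · have := hyp q hqf (dvd_mul_right _ _)
        rw [totalDegree_eq_zero_iff_eq_C] at this
        rw [this]
        apply neg_C
        intro h0
        apply hq.ne_zero
        rw [this, h0, C_0]
      · exact main_irr hcore d f q hq hqf
  by_cases hg : g = 0
  · by_cases hf : f = 0
    · exfalso
      have := hfg (X ⟨0, hd⟩) (by simp [hf]) (by simp [hg])
      simp at this
    · exact (aux g f hf fun h h1 h2 => hfg h h2 h1).symm
  · exact aux f g hg hfg


theorem card_box_succ (n B : ℕ) (P : (Fin (n+1) → ℤ) → Prop) [DecidablePred P] :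
    ((box (n+1) B).filter P).card =
      ∑ b ∈ box n B, ((ivl B).filter fun x => P (Fin.cons x b)).card := by
  classical
  rw [Finset.card_eq_sum_card_fiberwise (f := fun a => Fin.tail a) (t := box n B)]
  · refine Finset.sum_congr rfl fun b hb => ?_
    refine Finset.card_bij' (fun a _ => a 0) (fun x _ => Fin.cons x b) ?_ ?_ ?_ ?_
    · intro a ha
      simp only [Finset.mem_filter, Fintype.mem_piFinset] at ha ⊢
      obtain ⟨⟨h1, h2⟩, h3⟩ := ha
      subst h3
      exact ⟨h1 0, by simpa using h2⟩
    · intro x hx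
      simp only [Finset.mem_filter, Fintype.mem_piFinset] at hx hb ⊢
      refine ⟨⟨fun i => ?_, hx.2⟩, by simp⟩
      refine Fin.cases ?_ (fun j => ?_) i
      · simpa using hx.1
      · simpa using hb j
    · intro a ha
      simp only [Finset.mem_filter] at ha
      rw [← ha.2]
      exact Fin.cons_self_tail a
    · intro x hx
      simp
  · intro a ha
    simp only [Finset.coe_filter, Set.mem_ofPred_eq, Fintype.mem_piFinset, Finset.mem_coe] at ha ⊢
    intro i
    exact ha.1 i.succ

theorem card_ivl (B : ℕ) : (ivl B).card = 2 * B := by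
  simp only [ivl, Int.card_Ico]
  omega

theorem card_box (n B : ℕ) : (box n B).card = (2 * B) ^ n := by
  simp only [box, Fintype.card_piFinset_const, card_ivl]

theorem card_residue (B p : ℕ) (hp : 0 < p) (r : ZMod p) :
    (((ivl B).filter fun x : ℤ => (x : ZMod p) = r).card : ℝ) ≤ 2 * B / p + 1 := by
  obtain ⟨v, rfl⟩ := ZMod.intCast_surjective r
  have h := Int.Ico_filter_modEq_card (-(B : ℤ)) B (r := p) (by exact_mod_cast hp) v
  have e : ((ivl B).filter fun x : ℤ => (x : ZMod p) = (v : ZMod p)) =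
      (ivl B).filter fun x : ℤ => x ≡ v [ZMOD p] := by
    ext x
    simp only [Finset.mem_filter, ZMod.intCast_eq_intCast_iff]
  rw [e]
  have h1 := Int.ceil_lt_add_one (((B : ℤ) - v : ℚ) / ((p : ℤ) : ℚ))
  have h2 := Int.le_ceil (((-(B : ℤ) : ℤ) - v : ℚ) / ((p : ℤ) : ℚ))
  have hp' : (0 : ℚ) < p := by exact_mod_cast hp
  have h3 : (((ivl B).filter fun x : ℤ => x ≡ v [ZMOD p]).card : ℚ) ≤ 2 * B / p + 1 := by
    have : (((ivl B).filter fun x : ℤ => x ≡ v [ZMOD p]).card : ℚ) =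
      (((((ivl B).filter fun x : ℤ => x ≡ v [ZMOD p]).card : ℤ)) : ℚ) := by norm_cast
    rw [this, h, Int.cast_max]
    apply max_le
    · push_cast at h1 h2 ⊢
      have : (2 * B / p : ℚ) = (B - v) / p - (-B - v) / p := by field_simp; ring
      rw [this]
      linarith
    · push_cast; positivity
  have h4 := (Rat.cast_le (K := ℝ)).2 h3
  push_cast at h4
  exact h4

theorem card_poly_roots (B p k : ℕ) (hp : p.Prime) (F : Polynomial ℤ) (hk : F.natDegree ≤ k)
    (i : ℕ) (hi : ¬ (p : ℤ) ∣ F.coeff i) :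
    (((ivl B).filter fun x : ℤ => (p : ℤ) ∣ F.eval x).card : ℝ) ≤ k * (2 * B / p + 1) := by
  classical
  have := Fact.mk hp
  set G := F.map (Int.castRingHom (ZMod p)) with hG
  have hG0 : G ≠ 0 := by
    intro h0
    apply hi
    have : G.coeff i = 0 := by rw [h0]; simp
    rw [hG, Polynomial.coeff_map] at this
    exact (ZMod.intCast_zmod_eq_zero_iff_dvd _ _).1 (by simpa using this)
  have hsub : ((ivl B).filter fun x : ℤ => (p : ℤ) ∣ F.eval x) ⊆
      G.roots.toFinset.biUnion fun r => (ivl B).filter fun x : ℤ => (x : ZMod p) = r := by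
    intro x hx
    simp only [Finset.mem_filter, Finset.mem_biUnion, Multiset.mem_toFinset] at hx ⊢
    refine ⟨x, ?_, hx.1, rfl⟩
    rw [Polynomial.mem_roots hG0, Polynomial.IsRoot, hG, Polynomial.eval_intCast_map]
    simpa using (ZMod.intCast_zmod_eq_zero_iff_dvd _ _).2 hx.2
  have h1 : (((ivl B).filter fun x : ℤ => (p : ℤ) ∣ F.eval x).card : ℝ) ≤
      ∑ r ∈ G.roots.toFinset, (((ivl B).filter fun x : ℤ => (x : ZMod p) = r).card : ℝ) := by
    exact_mod_cast (Finset.card_le_card hsub).trans Finset.card_biUnion_le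
  have h2 : (G.roots.toFinset.card : ℝ) ≤ k := by
    exact_mod_cast (Multiset.toFinset_card_le _).trans
      ((Polynomial.card_roots' G).trans (Polynomial.natDegree_map_le.trans hk))
  calc _ ≤ _ := h1
    _ ≤ ∑ r ∈ G.roots.toFinset, ((2 * B / p + 1 : ℝ)) :=
      Finset.sum_le_sum fun r _ => card_residue B p hp.pos r
    _ = G.roots.toFinset.card * (2 * B / p + 1 : ℝ) := by rw [Finset.sum_const, nsmul_eq_mul]
    _ ≤ _ := by gcongr

theorem sz {R : Type*} [CommRing R] [IsDomain R] [DecidableEq R] {n : ℕ}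
    {h : MvPolynomial (Fin n) R} (hh : h ≠ 0) (S : Finset R) (hS : 0 < S.card) :
    (((Fintype.piFinset fun _ : Fin n => S).filter fun a => eval a h = 0).card : ℝ) ≤
      h.totalDegree / S.card * (S.card : ℝ) ^ n := by
  have := schwartz_zippel_totalDegree hh S
  rw [div_le_iff₀ (by positivity)] at this
  have h4 := (NNRat.cast_le (K := ℝ)).2 this
  push_cast at h4
  exact h4

theorem card_zero (n B : ℕ) (hB : 0 < B) (h : MvPolynomial (Fin n) ℤ) (hh : h ≠ 0) :
    (((box n B).filter fun a => eval a h = 0).card : ℝ) ≤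
      h.totalDegree / (2 * B) * (2 * B : ℝ) ^ n := by
  have := sz hh (ivl B) (by rw [card_ivl]; omega)
  rw [card_ivl] at this
  exact_mod_cast this

theorem card_modp (n B p : ℕ) (hp : p.Prime) (hpB : p ≤ B) (h : MvPolynomial (Fin n) ℤ)
    (m : Fin n →₀ ℕ) (hm : ¬ (p : ℤ) ∣ h.coeff m) :
    (((box n B).filter fun a => (p : ℤ) ∣ eval a h).card : ℝ) ≤
      h.totalDegree * (3 * B : ℝ) ^ n / p := by
  classical
  have := Fact.mk hp
  have hp0 : (0 : ℝ) < p := by exact_mod_cast hp.pos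
  set G := MvPolynomial.map (Int.castRingHom (ZMod p)) h with hG
  have hG0 : G ≠ 0 := by
    intro h0
    apply hm
    have : G.coeff m = 0 := by rw [h0]; simp
    rw [hG, coeff_map] at this
    exact (ZMod.intCast_zmod_eq_zero_iff_dvd _ _).1 (by simpa using this)
  have hGd : G.totalDegree ≤ h.totalDegree := by
    refine Finset.sup_mono ?_
    exact support_map_subset _ _
  set Zs := (Fintype.piFinset fun _ : Fin n => (Finset.univ : Finset (ZMod p))).filter
    fun a => eval a G = 0 with hZs
  have hZ := sz hG0 (Finset.univ : Finset (ZMod p)) (by simp [ZMod.card, hp.pos])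
  rw [← hZs, Finset.card_univ, ZMod.card] at hZ
  have hmaps : Set.MapsTo (fun (a : Fin n → ℤ) (i : Fin n) => ((a i : ℤ) : ZMod p))
      ((box n B).filter fun a => (p : ℤ) ∣ eval a h) Zs := by
    intro a ha
    simp only [Finset.coe_filter, Set.mem_ofPred_eq] at ha
    simp only [hZs, Finset.coe_filter, Set.mem_ofPred_eq]
    refine ⟨by simp, ?_⟩
    have e := MvPolynomial.eval₂_comp_left (Int.castRingHom (ZMod p)) (RingHom.id ℤ) a h
    rw [hG, eval_map]
    have := (ZMod.intCast_zmod_eq_zero_iff_dvd (eval a h) p).2 ha.2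
    rw [← this]
    change _ = Int.castRingHom (ZMod p) (eval a h)
    rw [MvPolynomial.eval, coe_eval₂Hom, e]
    rfl
  have hfib : ∀ r : Fin n → ZMod p,
      ((((box n B).filter fun a => (p : ℤ) ∣ eval a h).filter
        fun a => (fun i => ((a i : ℤ) : ZMod p)) = r).card : ℝ) ≤ (3 * B / p : ℝ) ^ n := by
    intro r
    have hs : (((box n B).filter fun a => (p : ℤ) ∣ eval a h).filter
        fun a => (fun i => ((a i : ℤ) : ZMod p)) = r) ⊆
        Fintype.piFinset fun i => (ivl B).filter fun x : ℤ => (x : ZMod p) = r i := by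
      intro a ha
      simp only [Finset.mem_filter, Fintype.mem_piFinset] at ha ⊢
      intro i
      exact ⟨ha.1.1 i, congrFun ha.2 i⟩
    have := Finset.card_le_card hs
    rw [Fintype.card_piFinset] at this
    calc _ ≤ ∏ i, (((ivl B).filter fun x : ℤ => (x : ZMod p) = r i).card : ℝ) := by
            exact_mod_cast this
      _ ≤ ∏ i : Fin n, (3 * B / p : ℝ) := by
        refine Finset.prod_le_prod (fun _ _ => by positivity) fun i _ => ?_
        refine (card_residue B p hp.pos (r i)).trans ?_
        have : (1 : ℝ) ≤ B / p := by
          rw [le_div_iff₀ hp0]; simpa using (by exact_mod_cast hpB : (p : ℝ) ≤ B)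
        have e : (3 * B / p : ℝ) = 2 * B / p + B / p := by ring
        rw [e]; linarith
      _ = _ := by rw [Finset.prod_const, Finset.card_univ, Fintype.card_fin]
  rw [Finset.card_eq_sum_card_fiberwise hmaps]
  push_cast
  calc _ ≤ ∑ r ∈ Zs, (3 * B / p : ℝ) ^ n := Finset.sum_le_sum fun r _ => hfib r
    _ = Zs.card * (3 * B / p : ℝ) ^ n := by simp
    _ ≤ (h.totalDegree / p * (p : ℝ) ^ n) * (3 * B / p : ℝ) ^ n := by
      gcongr
      refine hZ.trans ?_
      gcongr
    _ = _ := by rw [div_pow]; field_simp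

theorem omega_bound (n : ℕ) (h : MvPolynomial (Fin n) ℤ) (ε : ℝ) (hε : 0 < ε) :
    ∃ B₀ : ℕ, ∀ B, B₀ ≤ B → ∀ a ∈ box n B, eval a h ≠ 0 →
      (((eval a h).natAbs.primeFactors.card : ℝ)) ≤ ε * B := by
  set Cc : ℕ := ∑ m ∈ h.support, (h.coeff m).natAbs with hC
  set D := h.totalDegree
  have hval : ∀ B : ℕ, 1 ≤ B → ∀ a ∈ box n B, (eval a h).natAbs ≤ Cc * B ^ D := by
    intro B hB a ha
    rw [eval_eq', hC, Finset.sum_mul]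
    refine (Int.natAbs_sum_le _ _).trans (Finset.sum_le_sum fun m hm => ?_)
    rw [Int.natAbs_mul]
    gcongr
    have : (∏ i, a i ^ m i).natAbs = ∏ i, (a i).natAbs ^ m i := by
      rw [← Int.natAbsHom_apply, map_prod]
      simp [Int.natAbs_pow]
    rw [this]
    calc _ ≤ ∏ i, B ^ m i := by
          refine Finset.prod_le_prod' fun i _ => ?_
          gcongr
          have := Fintype.mem_piFinset.1 ha i
          simp only [Finset.mem_Ico] at this
          omega
      _ = B ^ (∑ i, m i) := Finset.prod_pow_eq_pow_sum _ _ _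
      _ ≤ _ := by
        apply Nat.pow_le_pow_right hB
        have := le_totalDegree hm
        rwa [Finsupp.sum_fintype _ _ (fun _ => rfl)] at this
  have hexp : Tendsto (fun B : ℕ => (Cc : ℝ) * ((B : ℝ) ^ D / Real.exp ((ε * Real.log 2) * B)))
      atTop (nhds 0) := by
    have h1 := Real.tendsto_pow_mul_exp_neg_atTop_nhds_zero D
    have hl : 0 < ε * Real.log 2 := mul_pos hε (Real.log_pos (by norm_num))
    have h2 : Tendsto (fun x : ℝ => x ^ D / Real.exp ((ε * Real.log 2) * x)) atTop (nhds 0) := by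
      have := isLittleO_pow_exp_pos_mul_atTop D hl
      exact this.tendsto_div_nhds_zero
    have := (h2.comp tendsto_natCast_atTop_atTop).const_mul (Cc : ℝ)
    simpa using this
  obtain ⟨B₀, hB₀⟩ := eventually_atTop.1 (hexp.eventually (gt_mem_nhds one_pos))
  refine ⟨max 1 B₀, fun B hB a ha hne => ?_⟩
  have h1 := hval B (le_trans (le_max_left _ _) hB) a ha
  have h2 := hB₀ B (le_trans (le_max_right _ _) hB)
  have h3 : 2 ^ (eval a h).natAbs.primeFactors.card ≤ (eval a h).natAbs := by
    refine le_trans ?_ (Nat.le_of_dvd (Int.natAbs_pos.2 hne) (Nat.prod_primeFactors_dvd _))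
    exact Finset.pow_card_le_prod _ _ _ fun p hp => (Nat.prime_of_mem_primeFactors hp).two_le
  have h4 : (2 : ℝ) ^ ((eval a h).natAbs.primeFactors.card) ≤ Cc * (B : ℝ) ^ D := by
    exact_mod_cast h3.trans h1
  have h5 : (Cc : ℝ) * (B : ℝ) ^ D < Real.exp ((ε * Real.log 2) * B) := by
    rw [← mul_div_assoc, div_lt_one (Real.exp_pos _)] at h2
    exact h2
  have h6 := Real.log_lt_log (by positivity) (h4.trans_lt h5)
  rw [Real.log_exp, Real.log_pow] at h6
  have hl : 0 < Real.log 2 := Real.log_pos (by norm_num)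
  nlinarith

open Classical in
theorem fiber_bound (n : ℕ) (f : MvPolynomial (Fin (n+1)) ℤ) (h : MvPolynomial (Fin n) ℤ) (i : ℕ)
    (M B : ℕ) (b : Fin n → ℤ) (w : ℝ) (hw : 0 ≤ w)
    (hω : eval b h ≠ 0 → ((eval b h).natAbs.primeFactors.card : ℝ) ≤ w) :
    (((ivl B).filter fun x => BadAt f ((finSuccEquiv ℤ n).symm (Polynomial.C h)) M
        (Fin.cons x b)).card : ℝ) ≤
      (if BadAt ((finSuccEquiv ℤ n f).coeff i) h M b then 2 * (B : ℝ) else 0) +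
      (if eval b h = 0 then 2 * (B : ℝ) else 0) +
      3 * (finSuccEquiv ℤ n f).natDegree * w +
      ∑ p ∈ Finset.Ioc M B, if p.Prime ∧ (p : ℤ) ∣ eval b h then
        2 * ((finSuccEquiv ℤ n f).natDegree : ℝ) * B / p else 0 := by
  set k := (finSuccEquiv ℤ n f).natDegree with hk
  set F := (finSuccEquiv ℤ n f).map (eval b) with hF
  have hFk : F.natDegree ≤ k := Polynomial.natDegree_map_le
  set S := (ivl B).filter fun x => BadAt f ((finSuccEquiv ℤ n).symm (Polynomial.C h)) M
        (Fin.cons x b) with hS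
  have hS2 : (S.card : ℝ) ≤ 2 * B := by
    have := Finset.card_filter_le (ivl B) fun x =>
      BadAt f ((finSuccEquiv ℤ n).symm (Polynomial.C h)) M (Fin.cons x b)
    rw [card_ivl] at this
    exact_mod_cast this
  have hsum : (0 : ℝ) ≤ ∑ p ∈ Finset.Ioc M B, if p.Prime ∧ (p : ℤ) ∣ eval b h then
        2 * (k : ℝ) * B / p else 0 := by
    refine Finset.sum_nonneg fun p _ => ?_
    split_ifs <;> positivity
  have hkw : 0 ≤ 3 * k * w := by positivity
  by_cases h1 : BadAt ((finSuccEquiv ℤ n f).coeff i) h M b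
  · rw [if_pos h1]
    have : (0 : ℝ) ≤ if eval b h = 0 then 2 * (B : ℝ) else 0 := by split_ifs <;> positivity
    linarith
  by_cases h2 : eval b h = 0
  · rw [if_neg h1, if_pos h2]
    linarith
  rw [if_neg h1, if_neg h2]
  have hω' := hω h2
  set P := (eval b h).natAbs.primeFactors.filter fun p => M < p with hP
  have hsub : S ⊆ P.biUnion fun p => (ivl B).filter fun x : ℤ => (p : ℤ) ∣ F.eval x := by
    intro x hx
    rw [hS, Finset.mem_filter] at hx
    obtain ⟨hxI, p, hp, hM, hf, hh⟩ := hx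
    rw [eval_eq_eval_mv_eval'] at hf hh
    simp only [AlgEquiv.apply_symm_apply, Polynomial.map_C, Polynomial.eval_C] at hh
    rw [Finset.mem_biUnion]
    refine ⟨p, ?_, ?_⟩
    · rw [hP, Finset.mem_filter, Nat.mem_primeFactors]
      exact ⟨⟨hp, Int.natCast_dvd.1 hh, Int.natAbs_ne_zero.2 h2⟩, hM⟩
    · rw [Finset.mem_filter]
      exact ⟨hxI, hf⟩
  have hcard : (S.card : ℝ) ≤
      ∑ p ∈ P, (((ivl B).filter fun x : ℤ => (p : ℤ) ∣ F.eval x).card : ℝ) := by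
    exact_mod_cast (Finset.card_le_card hsub).trans Finset.card_biUnion_le
  have hPp : ∀ p ∈ P, p.Prime ∧ (p : ℤ) ∣ eval b h ∧ M < p := by
    intro p hp
    rw [hP, Finset.mem_filter, Nat.mem_primeFactors] at hp
    exact ⟨hp.1.1, Int.natCast_dvd.2 hp.1.2.1, hp.2⟩
  have hterm : ∀ p ∈ P, (((ivl B).filter fun x : ℤ => (p : ℤ) ∣ F.eval x).card : ℝ) ≤
      3 * k + if p ≤ B then 2 * (k : ℝ) * B / p else 0 := by
    intro p hp
    obtain ⟨hpp, hpd, hpM⟩ := hPp p hp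
    have hi : ¬ (p : ℤ) ∣ F.coeff i := by
      intro hd
      rw [hF, Polynomial.coeff_map] at hd
      exact h1 ⟨p, hpp, hpM, hd, hpd⟩
    have := card_poly_roots B p k hpp F hFk i hi
    refine this.trans ?_
    have hp0 : (0 : ℝ) < p := by exact_mod_cast hpp.pos
    split_ifs with hpB
    · have e : (k : ℝ) * (2 * B / p + 1) = 2 * k * B / p + k := by ring
      rw [e]
      have : (0 : ℝ) ≤ k := by positivity
      linarith
    · have : (2 * B / p : ℝ) ≤ 2 := by
        rw [div_le_iff₀ hp0]
        have : (B : ℝ) ≤ p := by exact_mod_cast (not_le.1 hpB).le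
        linarith
      have hk0 : (0 : ℝ) ≤ k := by positivity
      nlinarith
  have hPc : (P.card : ℝ) ≤ w := by
    refine le_trans ?_ hω'
    exact_mod_cast Finset.card_filter_le _ _
  have hlast : (∑ p ∈ P, if p ≤ B then 2 * (k : ℝ) * B / p else 0) ≤
      ∑ p ∈ Finset.Ioc M B, if p.Prime ∧ (p : ℤ) ∣ eval b h then
        2 * (k : ℝ) * B / p else 0 := by
    rw [← Finset.sum_filter, ← Finset.sum_filter]
    refine Finset.sum_le_sum_of_subset_of_nonneg ?_ fun p _ _ => by positivity
    intro p hp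
    rw [Finset.mem_filter] at hp
    obtain ⟨hpp, hpd, hpM⟩ := hPp p hp.1
    rw [Finset.mem_filter, Finset.mem_Ioc]
    exact ⟨⟨hpM, hp.2⟩, hpp, hpd⟩
  have := hcard.trans (Finset.sum_le_sum hterm)
  rw [Finset.sum_add_distrib, Finset.sum_const, nsmul_eq_mul] at this
  have h3 : (P.card : ℝ) * (3 * k) ≤ 3 * k * w := by
    rw [mul_comm]; gcongr
  linarith

open Classical in
theorem core : Core := by
  intro n f h i hh H ε hε
  set k := (finSuccEquiv ℤ n f).natDegree with hk
  set D := h.totalDegree with hD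
  obtain ⟨m, hm⟩ := MvPolynomial.ne_zero_iff.1 hh
  obtain ⟨M₁, B₁, hB₁⟩ := H (ε / 4) (by positivity)
  obtain ⟨B₂, hB₂⟩ := omega_bound n h (ε / (6 * (k + 1))) (by positivity)
  obtain ⟨M₂, hM₂⟩ := exists_nat_gt (4 * (k * D * 3 ^ n) / ε)
  obtain ⟨B₃, hB₃⟩ := exists_nat_gt (2 * D / ε)
  set M := max (max M₁ M₂) (max (h.coeff m).natAbs 1) with hM
  have hMM₁ : M₁ ≤ M := by omega
  have hMM₂ : M₂ ≤ M := by omega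
  have hMm : (h.coeff m).natAbs ≤ M := by omega
  have hM1 : 1 ≤ M := by omega
  refine ⟨M, max (max B₁ B₂) (max B₃ M), fun B hB => ?_⟩
  have hBB₁ : B₁ ≤ B := by omega
  have hBB₂ : B₂ ≤ B := by omega
  have hBB₃ : B₃ ≤ B := by omega
  have hBM : M ≤ B := by omega
  have hB0 : (0 : ℝ) < B := by exact_mod_cast (by omega : 0 < B)
  have hM0 : (0 : ℝ) < M := by exact_mod_cast hM1
  set w : ℝ := ε / (6 * (k + 1)) * B with hw
  have hw0 : 0 ≤ w := by positivity
  unfold bad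
  rw [card_box_succ]
  push_cast
  refine (Finset.sum_le_sum fun b hb => fiber_bound n f h i M B b w hw0
    (hB₂ B hBB₂ b hb)).trans ?_
  rw [Finset.sum_add_distrib, Finset.sum_add_distrib, Finset.sum_add_distrib, Finset.sum_comm]
  have t1 : (∑ b ∈ box n B, if BadAt ((finSuccEquiv ℤ n f).coeff i) h M b then 2 * (B : ℝ) else 0)
      ≤ ε / 4 * (2 * B) ^ (n + 1) := by
    rw [← Finset.sum_filter, Finset.sum_const, nsmul_eq_mul]
    have h1 := hB₁ B hBB₁
    have h2 : ((bad ((finSuccEquiv ℤ n f).coeff i) h M B).card : ℝ) ≤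
        (bad ((finSuccEquiv ℤ n f).coeff i) h M₁ B).card := by
      exact_mod_cast Finset.card_le_card (bad_mono hMM₁)
    have h3 := h2.trans h1
    unfold bad at h3
    calc _ ≤ (ε / 4 * (2 * (B : ℝ)) ^ n) * (2 * B) := by gcongr
      _ = _ := by ring
  have t2 : (∑ b ∈ box n B, if eval b h = 0 then 2 * (B : ℝ) else 0)
      ≤ ε / 4 * (2 * B) ^ (n + 1) := by
    rw [← Finset.sum_filter, Finset.sum_const, nsmul_eq_mul]
    have h1 := card_zero n B (by omega) h hh
    have h2 : (D : ℝ) ≤ ε / 2 * B := by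
      rw [div_lt_iff₀ hε] at hB₃
      have : (B₃ : ℝ) ≤ B := by exact_mod_cast hBB₃
      nlinarith
    calc _ ≤ (D / (2 * B) * (2 * B : ℝ) ^ n) * (2 * B) := by gcongr
      _ = D * (2 * B : ℝ) ^ n := by field_simp
      _ ≤ (ε / 2 * B) * (2 * B : ℝ) ^ n := by gcongr
      _ = _ := by ring
  have t3 : (∑ b ∈ box n B, 3 * (k : ℝ) * w) ≤ ε / 4 * (2 * B) ^ (n + 1) := by
    rw [Finset.sum_const, nsmul_eq_mul, card_box]
    push_cast
    have : 3 * (k : ℝ) * w ≤ ε / 2 * B := by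
      have e : 3 * (k : ℝ) * w = (k / (k + 1)) * (ε / 2 * B) := by
        rw [hw]; field_simp; ring
      rw [e]
      apply mul_le_of_le_one_left (by positivity)
      rw [div_le_one (by positivity)]
      linarith
    calc _ ≤ (2 * B : ℝ) ^ n * (ε / 2 * B) := by gcongr
      _ = _ := by ring
  have t4 : (∑ p ∈ Finset.Ioc M B, ∑ b ∈ box n B, if p.Prime ∧ (p : ℤ) ∣ eval b h then
        2 * (k : ℝ) * B / p else 0) ≤ ε / 4 * (2 * B) ^ (n + 1) := by
    have each : ∀ p ∈ Finset.Ioc M B, (∑ b ∈ box n B, if p.Prime ∧ (p : ℤ) ∣ eval b h then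
        2 * (k : ℝ) * B / p else 0) ≤ (2 * k * B * (D * (3 * B) ^ n)) * ((p : ℝ) ^ 2)⁻¹ := by
      intro p hp
      rw [Finset.mem_Ioc] at hp
      by_cases hpp : p.Prime
      · simp only [hpp, true_and]
        rw [← Finset.sum_filter, Finset.sum_const, nsmul_eq_mul]
        have hmp : ¬ (p : ℤ) ∣ h.coeff m := by
          intro hd
          have := Nat.le_of_dvd (Int.natAbs_pos.2 hm) (Int.natCast_dvd.1 hd)
          omega
        have hc := card_modp n B p hpp hp.2 h m hmp
        calc _ ≤ (D * (3 * B : ℝ) ^ n / p) * (2 * k * B / p) := by gcongr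
          _ = _ := by rw [sq, mul_inv]; simp only [div_eq_mul_inv]; ring
      · simp only [hpp, false_and, if_false, Finset.sum_const_zero]
        positivity
    refine (Finset.sum_le_sum each).trans ?_
    rw [← Finset.mul_sum]
    have hs := sum_Ioc_inv_sq_le_sub (α := ℝ) (k := M) (n := B) (by omega) hBM
    have hs' : (∑ p ∈ Finset.Ioc M B, ((p : ℝ) ^ 2)⁻¹) ≤ (M : ℝ)⁻¹ := by
      have : (0 : ℝ) ≤ (B : ℝ)⁻¹ := by positivity
      linarith
    have hq : (k : ℝ) * D * 3 ^ n * (M : ℝ)⁻¹ ≤ ε / 4 := by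
      rw [div_lt_iff₀ hε] at hM₂
      have : (M₂ : ℝ) ≤ M := by exact_mod_cast hMM₂
      rw [← div_eq_mul_inv, div_le_iff₀ hM0]
      nlinarith
    calc _ ≤ (2 * k * B * (D * (3 * B) ^ n)) * (M : ℝ)⁻¹ := by gcongr
      _ = ((k : ℝ) * D * 3 ^ n * (M : ℝ)⁻¹) * (2 * B * B ^ n) := by rw [mul_pow]; ring
      _ ≤ (ε / 4) * (2 * B * (2 * B) ^ n) := by
        gcongr
        linarith
      _ = _ := by ring
  linarith

end Ekedahl

/-- if `f, g ∈ ℤ[x_1,…,x_d]` have no common nonconstant factor, then the upper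
density of `S_M(f,g) = {a ∈ ℤ^d : p ∣ f(a), p ∣ g(a) for some prime p > M}` tends to `0`
as `M → ∞`. -/
theorem ekedahl_sieve (d : ℕ) (hd : 0 < d) (f g : MvPolynomial (Fin d) ℤ)
    (hfg : ∀ h : MvPolynomial (Fin d) ℤ, h ∣ f → h ∣ g → h.totalDegree = 0) :
    Tendsto
      (fun M : ℕ =>
        upperDensity {a : Fin d → ℤ |
          ∃ p : ℕ, p.Prime ∧ M < p ∧
            (p : ℤ) ∣ MvPolynomial.eval a f ∧ (p : ℤ) ∣ MvPolynomial.eval a g})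
      atTop (nhds 0) := by
  classical
  have H := Ekedahl.main_neg Ekedahl.core d hd f g hfg
  have hcard : ∀ M B : ℕ, Nat.card {a : Fin d → ℤ // a ∈ {a : Fin d → ℤ |
          ∃ p : ℕ, p.Prime ∧ M < p ∧
            (p : ℤ) ∣ MvPolynomial.eval a f ∧ (p : ℤ) ∣ MvPolynomial.eval a g} ∧
            ∀ i, -(B : ℤ) ≤ a i ∧ a i < B} = (Ekedahl.bad f g M B).card := by
    intro M B
    rw [Nat.card_congr (β := Ekedahl.bad f g M B) (Equiv.subtypeEquivRight fun a => ?_)]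
    · simp
    · simp only [Ekedahl.bad, Finset.mem_filter, Fintype.mem_piFinset, Finset.mem_Ico]
      exact and_comm
  rw [Metric.tendsto_atTop]
  intro ε hε
  obtain ⟨M, B₀, hB⟩ := H (ε / 2) (by positivity)
  refine ⟨M, fun N hN => ?_⟩
  unfold upperDensity
  simp only [hcard]
  set u : ℕ → ℝ := fun B => ((Ekedahl.bad f g N B).card : ℝ) / (2 * (B : ℝ)) ^ d with hu
  have hu0 : ∀ B, 0 ≤ u B := fun B => by positivity
  have hu1 : ∀ᶠ B in atTop, u B ≤ ε / 2 := by
    filter_upwards [eventually_ge_atTop B₀] with B hBB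
    have h2 : ((Ekedahl.bad f g N B).card : ℝ) ≤ (Ekedahl.bad f g M B).card := by
      exact_mod_cast Finset.card_le_card (Ekedahl.bad_mono hN)
    exact div_le_of_le_mul₀ (by positivity) (by positivity) (h2.trans (hB B hBB))
  have hbdd : IsBoundedUnder (· ≤ ·) atTop u := ⟨ε / 2, by simpa using hu1⟩
  have hcob : IsCoboundedUnder (· ≤ ·) atTop u :=
    IsBoundedUnder.isCoboundedUnder_le ⟨0, by simp [hu0]⟩
  have l1 : limsup u atTop ≤ ε / 2 := limsup_le_of_le hcob hu1
  have l2 : 0 ≤ limsup u atTop :=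
    le_limsup_of_frequently_le (Frequently.of_forall hu0) hbdd
  rw [Real.dist_eq, sub_zero, abs_of_nonneg l2]
  linarith
end

section
/- (Poonen–Stoll local-global principle, convergence.) Let d be a positive integer. Let U_∞ ⊆ ℝ^d satisfy ℝ_{≥0}·U_∞ = U_∞ and μ_∞(∂U_∞) = 0, and set s_∞ = μ_∞(U_∞ ∩ [−1,1]^d)/2^d, where μ_∞ is Lebesgue measure. For each prime p let U_p ⊆ ℤ_p^d satisfy μ_p(∂U_p) = 0, and set s_p = μ_p(U_p), where μ_p is the normalized Haar measure on ℤ_p^d. If lim_{M→∞} ρ̄({ a ∈ ℤ^d : a ∈ U_p for some prime p > M }) = 0, where ℤ^d embeds in ℤ_p^d canonically, then the series Σ_{ν ∈ M_ℚ} s_ν = s_∞ + Σ_{p prime} s_p converges. -/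
set_option synthInstance.maxHeartbeats 1000000
set_option maxHeartbeats 1000000

open Filter MeasureTheory

instance factPrimes (p : Nat.Primes) : Fact (Nat.Prime (p : ℕ)) := ⟨p.2⟩

noncomputable instance padicMeasurableSpace (p : ℕ) [Fact p.Prime] :
    MeasurableSpace ℤ_[p] := borel _

instance padicBorelSpace (p : ℕ) [Fact p.Prime] : BorelSpace ℤ_[p] := ⟨rfl⟩

/-- The local masses `s_ν` of the Poonen–Stoll local-global principle: `s_∞` is the Lebesgue
measure of `U_∞ ∩ [−1,1]^d` divided by `2^d`, and `s_p = μ_p(U_p)`; the place `∞` is encoded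
as `none : Option Nat.Primes` and a prime `p` as `some p`. -/
noncomputable def placeMass (d : ℕ) (Uinf : Set (Fin d → ℝ))
    (Up : (p : Nat.Primes) → Set (Fin d → ℤ_[(p : ℕ)]))
    (μ : (p : Nat.Primes) → Measure (Fin d → ℤ_[(p : ℕ)])) :
    Option Nat.Primes → ℝ
  | none =>
      (volume (Uinf ∩ Set.pi Set.univ fun _ => Set.Icc (-1 : ℝ) 1)).toReal / 2 ^ d
  | some p => ((μ p) (Up p)).toReal

theorem ratio_le_one {d : ℕ} (S : Set (Fin d → ℤ)) (B : ℕ) :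
    (Nat.card {a : Fin d → ℤ // a ∈ S ∧ ∀ i, -(B : ℤ) ≤ a i ∧ a i < B} : ℝ) /
        (2 * (B : ℝ)) ^ d ≤ 1 := by
  apply div_le_one_of_le₀ _ (by positivity)
  have h : Nat.card {a : Fin d → ℤ // a ∈ S ∧ ∀ i, -(B : ℤ) ≤ a i ∧ a i < B} ≤
      Nat.card (Fin d → Finset.Ico (-(B : ℤ)) B) := by
    refine Nat.card_le_card_of_injective
      (fun a i => ⟨a.1 i, Finset.mem_Ico.2 (a.2.2 i)⟩) ?_
    intro a b hab
    apply Subtype.ext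
    funext i
    exact congrArg Subtype.val (congrFun hab i)
  rw [Nat.card_fun, Nat.card_eq_fintype_card (α := Finset.Ico _ _), Fintype.card_coe, Int.card_Ico,
    Nat.card_fin] at h
  have h2 : ((B : ℤ) - -(B : ℤ)).toNat = 2 * B := by omega
  rw [h2] at h
  exact_mod_cast h

theorem finite_box {d : ℕ} (S : Set (Fin d → ℤ)) (B : ℕ) :
    Finite {a : Fin d → ℤ // a ∈ S ∧ ∀ i, -(B : ℤ) ≤ a i ∧ a i < B} := by
  refine Finite.of_injective
      (β := Fin d → Finset.Ico (-(B : ℤ)) B) (fun a i => ⟨a.1 i, Finset.mem_Ico.2 (a.2.2 i)⟩) ?_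
  intro a b hab
  apply Subtype.ext
  funext i
  exact congrArg Subtype.val (congrFun hab i)

theorem card_lower {d : ℕ} (S : Set (Fin d → ℤ)) (Q : ℕ) [NeZero Q]
    (T : Set (Fin d → ZMod Q))
    (hT : ∀ x : Fin d → ℤ, (fun i => (x i : ZMod Q)) ∈ T → x ∈ S) (k : ℕ) :
    (2 * k) ^ d * Nat.card T ≤
      Nat.card {a : Fin d → ℤ // a ∈ S ∧ ∀ i, -((k * Q : ℕ) : ℤ) ≤ a i ∧ a i < (k * Q : ℕ)} := by
  have := finite_box S (k * Q)
  have hc : (2 * k) ^ d * Nat.card T = Nat.card ((Fin d → Fin (2 * k)) × T) := by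
    rw [Nat.card_prod]
    simp
  rw [hc]
  have hQ : (0 : ℤ) < Q := by exact_mod_cast Nat.pos_of_ne_zero (NeZero.ne Q)
  refine Nat.card_le_card_of_injective
    (fun mt => ⟨fun i => -((k * Q : ℕ) : ℤ) + (mt.1 i : ℕ) * Q + ((mt.2.1 i).val : ℤ), ?_, ?_⟩) ?_
  · apply hT
    have : (fun i => ((-((k * Q : ℕ) : ℤ) + (mt.1 i : ℕ) * Q + ((mt.2.1 i).val : ℤ) : ℤ) : ZMod Q))
        = mt.2.1 := by
      funext i
      push_cast
      simp
    rw [this]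
    exact mt.2.2
  · intro i
    have h1 : (mt.2.1 i).val < Q := ZMod.val_lt _
    have h2 : (mt.1 i : ℕ) < 2 * k := (mt.1 i).2
    have h1' : ((mt.2.1 i).val : ℤ) < Q := by exact_mod_cast h1
    have h2' : ((mt.1 i : ℕ) : ℤ) + 1 ≤ 2 * k := by exact_mod_cast h2
    push_cast
    constructor
    · have : (0 : ℤ) ≤ ((mt.1 i : ℕ) : ℤ) * Q := by positivity
      have : (0 : ℤ) ≤ ((mt.2.1 i).val : ℤ) := by positivity
      linarith
    · have := mul_le_mul_of_nonneg_right h2' hQ.le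
      linarith
  · rintro ⟨m, t⟩ ⟨m', t'⟩ h
    have h := congrArg Subtype.val h
    have key : ∀ i, m i = m' i ∧ t.1 i = t'.1 i := by
      intro i
      have hi := congrFun h i
      simp only at hi
      have ht : t.1 i = t'.1 i := by
        have := congrArg (fun z : ℤ => (z : ZMod Q)) hi
        simpa using this
      refine ⟨?_, ht⟩
      rw [ht] at hi
      have h3 : ((m i : ℕ) : ℤ) * Q = (m' i : ℕ) * Q := by linarith
      have h4 := mul_right_cancel₀ hQ.ne' h3
      exact Fin.ext (by exact_mod_cast h4)
    exact Prod.ext (funext fun i => (key i).1) (Subtype.ext (funext fun i => (key i).2))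

theorem upperDensity_lower {d : ℕ} (S : Set (Fin d → ℤ)) (Q : ℕ) [NeZero Q]
    (T : Set (Fin d → ZMod Q))
    (hT : ∀ x : Fin d → ℤ, (fun i => (x i : ZMod Q)) ∈ T → x ∈ S) :
    (Nat.card T : ℝ) / (Q : ℝ) ^ d ≤ upperDensity S := by
  unfold upperDensity
  have hQ : 0 < Q := Nat.pos_of_ne_zero (NeZero.ne Q)
  apply le_limsup_of_frequently_le
  · rw [frequently_atTop]
    intro N
    refine ⟨(N + 1) * Q, by nlinarith, ?_⟩
    have h := card_lower S Q T hT (N + 1)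
    rw [le_div_iff₀ (by positivity), div_mul_eq_mul_div, div_le_iff₀ (by positivity)]
    have h' : (((2 * (N + 1)) ^ d * Nat.card T : ℕ) : ℝ) ≤ (Nat.card {a : Fin d → ℤ //
      a ∈ S ∧ ∀ i, -(((N + 1) * Q : ℕ) : ℤ) ≤ a i ∧ a i < ((N + 1) * Q : ℕ)} : ℝ) := by
      exact_mod_cast h
    refine le_trans (le_of_eq ?_) (mul_le_mul_of_nonneg_right h' (by positivity))
    push_cast
    simp only [mul_pow]
    ring
  · exact isBoundedUnder_of ⟨1, fun B => ratio_le_one S B⟩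

theorem crt_lower {d : ℕ} {ι : Type*} [Fintype ι] (a : ι → ℕ) (ha : ∀ i, a i ≠ 0)
    (hco : Pairwise (Function.onFun Nat.Coprime a)) (A : ∀ i, Set (Fin d → ZMod (a i)))
    (S : Set (Fin d → ℤ))
    (hS : ∀ x : Fin d → ℤ, ∀ i, (fun j => (x j : ZMod (a i))) ∈ A i → x ∈ S) :
    1 - ∏ i, (1 - (Nat.card (A i) : ℝ) / (a i : ℝ) ^ d) ≤ upperDensity S := by
  classical
  have hne : ∀ i, NeZero (a i) := fun i => ⟨ha i⟩
  have hQ : NeZero (∏ i, a i) := ⟨Finset.prod_ne_zero_iff.2 fun i _ => ha i⟩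
  set e := ZMod.prodEquivPi a hco with he
  let T : Set (Fin d → ZMod (∏ i, a i)) := {t | ∃ i, (fun j => e (t j) i) ∈ A i}
  refine le_trans (le_of_eq ?_) (upperDensity_lower S _ T ?_)
  · -- count
    have hcompl : Nat.card (Tᶜ : Set _) = ∏ i, Nat.card ((A i)ᶜ : Set _) := by
      rw [← Nat.card_pi]
      apply Nat.card_congr
      let E : (Fin d → ZMod (∏ i, a i)) ≃ (∀ i, Fin d → ZMod (a i)) :=
        (Equiv.piCongrRight fun _ => e.toEquiv).trans (Equiv.piComm _)
      have hE : ∀ t, t ∈ Tᶜ ↔ ∀ i, E t i ∈ (A i)ᶜ := by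
        intro t
        simp only [T, Set.mem_compl_iff, Set.mem_ofPred_eq, not_exists]
        rfl
      exact (E.subtypeEquiv (q := fun f => ∀ i, f i ∈ (A i)ᶜ) hE).trans
        (Equiv.subtypePiEquivPi (p := fun i f => f ∈ (A i)ᶜ))
    have hadd : ∀ (N : ℕ) [NeZero N] (X : Set (Fin d → ZMod N)),
        (Nat.card X : ℝ) + Nat.card (Xᶜ : Set _) = (N : ℝ) ^ d := by
      intro N _ X
      have := Set.ncard_add_ncard_compl X
      rw [Nat.card_coe_set_eq, Nat.card_coe_set_eq]
      rw [Nat.card_fun, Nat.card_zmod, Nat.card_fin] at this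
      exact_mod_cast this
    have h1 := hadd _ T
    rw [hcompl] at h1
    have hpos : ((∏ i, a i : ℕ) : ℝ) ^ d ≠ 0 := pow_ne_zero _ (Nat.cast_ne_zero.2 hQ.ne)
    rw [eq_div_iff hpos, eq_sub_of_add_eq h1, sub_mul, one_mul]
    congr 1
    push_cast
    rw [← Finset.prod_pow, ← Finset.prod_mul_distrib]
    apply Finset.prod_congr rfl
    intro i _
    have h2 := hadd (a i) (A i)
    have hpi : (a i : ℝ) ^ d ≠ 0 := pow_ne_zero _ (Nat.cast_ne_zero.2 (ha i))
    rw [sub_mul, div_mul_cancel₀ _ hpi]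
    linarith
  · rintro x ⟨i, hi⟩
    apply hS x i
    convert hi using 2 with j
    simp [he, ZMod.prodEquivPi_apply]

section local_
variable {p : ℕ} [Fact p.Prime] {d : ℕ}

/-- Reduction modulo `p ^ e`. -/
noncomputable def redn (p : ℕ) [Fact p.Prime] (d e : ℕ) (x : Fin d → ℤ_[p]) :
    Fin d → ZMod (p ^ e) :=
  fun i => PadicInt.toZModPow e (x i)

theorem toZModPow_eq_iff' (e : ℕ) (x y : ℤ_[p]) :
    PadicInt.toZModPow e x = PadicInt.toZModPow e y ↔ dist x y ≤ (p : ℝ) ^ (-e : ℤ) := by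
  rw [dist_eq_norm, PadicInt.norm_le_pow_iff_mem_span_pow, ← PadicInt.ker_toZModPow,
    RingHom.mem_ker, map_sub, sub_eq_zero]

theorem redn_eq_iff (e : ℕ) (x y : Fin d → ℤ_[p]) :
    redn p d e x = redn p d e y ↔ dist x y ≤ (p : ℝ) ^ (-e : ℤ) := by
  have hp : (0 : ℝ) < p := by exact_mod_cast (Fact.out : p.Prime).pos
  rw [dist_pi_le_iff (by positivity), funext_iff]
  exact forall_congr' fun i => toZModPow_eq_iff' e _ _

theorem redn_surj (e : ℕ) : Function.Surjective (redn p d e) := by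
  intro t
  have : NeZero (p ^ e) := ⟨pow_ne_zero _ (Fact.out : p.Prime).ne_zero⟩
  refine ⟨fun i => ((t i).val : ℤ_[p]), ?_⟩
  funext i
  simp [redn]

theorem redn_isOpen (e : ℕ) (A : Set (Fin d → ZMod (p ^ e))) : IsOpen (redn p d e ⁻¹' A) := by
  have hp : (0 : ℝ) < p := by exact_mod_cast (Fact.out : p.Prime).pos
  rw [Metric.isOpen_iff]
  intro x hx
  refine ⟨(p : ℝ) ^ (-e : ℤ), by positivity, fun y hy => ?_⟩
  have := (redn_eq_iff e y x).2 (Metric.mem_ball.1 hy).le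
  rw [Set.mem_preimage, this]
  exact hx

/-- Residues whose full class lies in `U`. -/
def resid (U : Set (Fin d → ℤ_[p])) (e : ℕ) : Set (Fin d → ZMod (p ^ e)) :=
  {t | redn p d e ⁻¹' {t} ⊆ U}

theorem measure_redn (μ : Measure (Fin d → ℤ_[p])) [μ.IsAddHaarMeasure] [IsProbabilityMeasure μ]
    (e : ℕ) (A : Set (Fin d → ZMod (p ^ e))) :
    (μ (redn p d e ⁻¹' A)).toReal = (Nat.card A : ℝ) / ((p ^ e : ℕ) : ℝ) ^ d := by
  classical
  have hN : NeZero (p ^ e) := ⟨pow_ne_zero _ (Fact.out : p.Prime).ne_zero⟩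
  have hfib : ∀ t, μ (redn p d e ⁻¹' {t}) = μ (redn p d e ⁻¹' {0}) := by
    intro t
    obtain ⟨x, rfl⟩ := redn_surj e t
    rw [← measure_preimage_add μ x (redn p d e ⁻¹' {redn p d e x})]
    congr 1
    ext y
    simp only [Set.mem_preimage, Set.mem_singleton_iff, funext_iff, redn, Pi.add_apply, map_add,
      Pi.zero_apply, add_eq_left]
  have hs : ∀ B : Finset (Fin d → ZMod (p ^ e)),
      μ (redn p d e ⁻¹' B) = B.card * μ (redn p d e ⁻¹' {0}) := by
    intro B
    rw [← sum_measure_preimage_singleton B fun y _ => (redn_isOpen e {y}).measurableSet]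
    simp [hfib]
  have h1 := hs Finset.univ
  rw [Finset.coe_univ, Set.preimage_univ, measure_univ, Finset.card_univ, Fintype.card_fun,
    ZMod.card, Fintype.card_fin] at h1
  have h2 := congrArg ENNReal.toReal h1
  rw [ENNReal.toReal_mul, ENNReal.toReal_natCast, ENNReal.toReal_one] at h2
  have h3 := congrArg ENNReal.toReal (hs A.toFinset)
  rw [Set.coe_toFinset, ENNReal.toReal_mul, ENNReal.toReal_natCast] at h3
  rw [h3, Nat.card_eq_fintype_card, Set.toFinset_card]
  have hpos : ((p ^ e : ℕ) : ℝ) ^ d ≠ 0 := pow_ne_zero _ (Nat.cast_ne_zero.2 hN.ne)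
  rw [eq_div_iff hpos, mul_assoc]
  rw [Nat.cast_pow, mul_comm] at h2
  rw [← h2, mul_one]

theorem tendsto_resid (μ : Measure (Fin d → ℤ_[p])) [μ.IsAddHaarMeasure] [IsProbabilityMeasure μ]
    (U : Set (Fin d → ℤ_[p])) (hU : μ (frontier U) = 0) :
    Tendsto (fun e : ℕ => (Nat.card (resid U e) : ℝ) / ((p ^ e : ℕ) : ℝ) ^ d) atTop
      (nhds (μ U).toReal) := by
  have hp : (1 : ℝ) < p := by exact_mod_cast (Fact.out : p.Prime).one_lt
  simp_rw [← measure_redn μ]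
  refine (ENNReal.tendsto_toReal (measure_ne_top μ U)).comp ?_
  rw [← measure_interior_of_null_frontier hU]
  have hun : interior U = ⋃ e, redn p d e ⁻¹' (resid U e) := by
    apply Set.Subset.antisymm
    · intro x hx
      obtain ⟨ε, hε, hb⟩ := Metric.isOpen_iff.1 isOpen_interior x hx
      obtain ⟨n, hn⟩ := exists_pow_lt_of_lt_one hε (inv_lt_one_of_one_lt₀ hp)
      refine Set.mem_iUnion.2 ⟨n, fun y hy => interior_subset (hb ?_)⟩
      have := (redn_eq_iff n y x).1 hy
      rw [Metric.mem_ball]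
      refine lt_of_le_of_lt this ?_
      rwa [zpow_neg, zpow_natCast, ← inv_pow]
    · refine Set.iUnion_subset fun e => interior_maximal ?_ (redn_isOpen e _)
      intro x hx
      exact hx rfl
  rw [hun]
  apply tendsto_measure_iUnion_atTop
  intro m n hmn x hx y hy
  apply hx
  change redn p d m y = redn p d m x
  have h := (redn_eq_iff n y x).1 hy
  refine (redn_eq_iff m y x).2 (h.trans ?_)
  exact zpow_le_zpow_right₀ hp.le (by omega)

end local_

theorem poonen_stoll_summable (d : ℕ) (hd : 0 < d)
    (Uinf : Set (Fin d → ℝ))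
    (hcone : {y : Fin d → ℝ | ∃ c : ℝ, 0 ≤ c ∧ ∃ x ∈ Uinf, y = c • x} = Uinf)
    (hfrInf : volume (frontier Uinf) = 0)
    (Up : (p : Nat.Primes) → Set (Fin d → ℤ_[(p : ℕ)]))
    (μ : (p : Nat.Primes) → Measure (Fin d → ℤ_[(p : ℕ)]))
    (hHaar : ∀ p, (μ p).IsAddHaarMeasure)
    (hProb : ∀ p, IsProbabilityMeasure (μ p))
    (hfr : ∀ p, μ p (frontier (Up p)) = 0)
    (hcond : Tendsto
      (fun M : ℕ => upperDensity {a : Fin d → ℤ |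
        ∃ p : Nat.Primes, M < (p : ℕ) ∧ (fun i => ((a i : ℤ_[(p : ℕ)]))) ∈ Up p})
      atTop (nhds 0)) :
    Summable (placeMass d Uinf Up μ) := by
  classical
  obtain ⟨M, hM⟩ := (hcond.eventually (gt_mem_nhds (show (0 : ℝ) < 1 / 2 by norm_num))).exists
  -- bound for large primes
  have key : ∀ F : Finset Nat.Primes, (∀ p ∈ F, M < (p : ℕ)) →
      ∑ p ∈ F, ((μ p) (Up p)).toReal ≤ Real.log 2 := by
    intro F hF
    have hlim : Tendsto (fun e : ℕ => ∑ p ∈ F, (Nat.card (resid (Up p) e) : ℝ) /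
        (((p : ℕ) ^ e : ℕ) : ℝ) ^ d) atTop (nhds (∑ p ∈ F, ((μ p) (Up p)).toReal)) :=
      tendsto_finsetSum _ fun p _ => tendsto_resid (μ p) (Up p) (hfr p)
    refine le_of_tendsto' hlim fun e => ?_
    have hcrt := crt_lower (d := d) (ι := F) (fun p => ((p : Nat.Primes) : ℕ) ^ e)
      (fun p => pow_ne_zero _ p.1.2.ne_zero)
      (fun p q hpq => Nat.Coprime.pow _ _ ((Nat.coprime_primes p.1.2 q.1.2).2
        fun h => hpq (Subtype.ext (Subtype.ext h))))
      (fun p => resid (Up p) e)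
      {a : Fin d → ℤ |
        ∃ p : Nat.Primes, M < (p : ℕ) ∧ (fun i => ((a i : ℤ_[(p : ℕ)]))) ∈ Up p}
      (by
        intro x p hx
        refine ⟨p, hF p p.2, hx ?_⟩
        simp only [Set.mem_preimage, Set.mem_singleton_iff]
        funext i
        simp [redn])
    have hle : ∏ p : F, (1 - (Nat.card (resid (Up p) e) : ℝ) /
        ((((p : Nat.Primes) : ℕ) ^ e : ℕ) : ℝ) ^ d) ≤
        Real.exp (-∑ p ∈ F, (Nat.card (resid (Up p) e) : ℝ) /
        (((p : ℕ) ^ e : ℕ) : ℝ) ^ d) := by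
      rw [← Finset.sum_coe_sort F, ← Finset.sum_neg_distrib, Real.exp_sum]
      apply Finset.prod_le_prod
      · intro p _
        rw [← measure_redn (μ p), sub_nonneg]
        exact ENNReal.toReal_le_of_le_ofReal zero_le_one (by simpa using prob_le_one)
      · intro p _
        exact Real.one_sub_le_exp_neg _
    have h2 : (1 : ℝ) / 2 ≤ Real.exp (-∑ p ∈ F, (Nat.card (resid (Up p) e) : ℝ) /
        (((p : ℕ) ^ e : ℕ) : ℝ) ^ d) := by linarith
    have h3 := Real.log_le_log (by norm_num) h2
    rw [Real.log_exp, one_div, Real.log_inv] at h3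
    linarith
  have hle1 : ∀ p, ((μ p) (Up p)).toReal ≤ 1 := fun p =>
    ENNReal.toReal_le_of_le_ofReal zero_le_one (by simpa using prob_le_one)
  have hprimes : Summable fun p : Nat.Primes => ((μ p) (Up p)).toReal := by
    apply summable_of_sum_le (c := (M + 1 : ℝ) + Real.log 2)
    · intro p; exact ENNReal.toReal_nonneg
    intro F
    rw [← Finset.sum_filter_add_sum_filter_not F (fun p => (p : ℕ) ≤ M)]
    apply add_le_add
    · refine (Finset.sum_le_card_nsmul _ _ 1 fun p _ => hle1 p).trans ?_
      rw [nsmul_eq_mul, mul_one]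
      have : (F.filter fun p : Nat.Primes => (p : ℕ) ≤ M).card ≤ (Finset.range (M + 1)).card :=
        Finset.card_le_card_of_injOn (fun p : Nat.Primes => (p : ℕ))
          (fun p hp => by
            have := (Finset.mem_filter.1 hp).2
            simp only [Finset.coe_range, Set.mem_Iio]
            omega)
          (Nat.Primes.coe_nat_injective.injOn)
      rw [Finset.card_range] at this
      exact_mod_cast this
    · apply key
      intro p hp
      exact not_le.1 (Finset.mem_filter.1 hp).2
  rw [← (Equiv.optionEquivSumPUnit.{0} Nat.Primes).symm.summable_iff]
  apply Summable.sum
  · exact hprimes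
  · exact (hasSum_fintype _).summable
end
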